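/- Let j ≥ 2 and suppose H(j) > 0, where H(j) is the determinant of the (j−1)×(j−1) matrix whose (r,s) entry is ⟨f_{r+1}, f_{s+1}⟩ for 1 ≤ r ≤ j−1 and 1 ≤ s ≤ j−2, and whose last column has entries r/(r+1) for 1 ≤ r ≤ j−1. Then there exists an integer k₀(j) such that ⟨e_j, f_k⟩ > 0 for all integers k ≥ k₀(j). -/

import Mathlib

/-!
For `1/x ∈ [n, n+1)` one has `f k x = (n mod k) / k`. Splitting `(0,1]` at `1/k`, where to the right
`f k x = ⌊1/x⌋ / k`, gives
`k ⟨f_m, f_k⟩ = ∑_{n<k} ((n mod m)/m) / (n+1) + O(1)`. The sequence `(n mod m)/m` is periodic with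
mean `(m-1)/(2m)`, and its deviation from the mean has bounded partial sums, so by Dirichlet's test
`k ⟨f_m, f_k⟩ = (m-1)/(2m) · ∑_{n<k} 1/(n+1) + O(1)` (`ip_asymp`). Writing `e_j = ∑ c_m f_m`, the
divergence of the harmonic series shows that `⟨e_j, f_k⟩ > 0` for large `k` as soon as
`L = ∑ c_m (m-1)/m > 0` (`eventually_pos`).

The sign of `L` is that of `H j`: orthogonality of `e_j` to `f_2, …, f_{j-1}` says that the row
vector `c` kills every column but the last one of the matrix defining `H j`, and sends the last
column to `L`. Multiplying by the adjugate yields `c_j · H(j) = L · D`, where `D ≥ 0` is the Gram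
determinant of `f_2, …, f_{j-1}`. As `c_j > 0` and `H(j) > 0`, both `D` and `L` are positive
(`pairing_pos`); linear independence of the `f_k` is not needed.
-/

open MeasureTheory

/-- `f k x = (1/k)⌊1/x⌋ − ⌊1/(kx)⌋`. -/
noncomputable def f (k : ℕ) (x : ℝ) : ℝ := (⌊1/x⌋ : ℝ) / k - (⌊1/(k*x)⌋ : ℝ)

/-- The inner product of `L²(0,1)`: `⟨g,h⟩ = ∫₀¹ g(x)h(x) dx`. -/
noncomputable def ip (g h : ℝ → ℝ) : ℝ := ∫ x in Set.Ioc (0:ℝ) 1, g x * h x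

/-- `H j`: the determinant of the `(j−1)×(j−1)` matrix with entries
`⟨f_{r+2},f_{s+2}⟩` except that the last column is `(r+1)/(r+2)`,
i.e. `1/2, 2/3, …, (j−1)/j`. -/
noncomputable def H (j : ℕ) : ℝ :=
  Matrix.det (Matrix.of fun r s : Fin (j - 1) =>
    if s.val = j - 2 then ((r.val : ℝ) + 1) / ((r.val : ℝ) + 2)
    else ip (f (r.val + 2)) (f (s.val + 2)))

/-! ### Basic properties of `f` and of the inner product -/

theorem f_eq {k : ℕ} (hk : 1 ≤ k) {x : ℝ} (hx : 0 < x) : f k x = ((⌊1/x⌋₊ % k : ℕ) : ℝ) / k := by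
  have hk' : (0:ℝ) < k := by exact_mod_cast hk
  have h1 : 1 / (k * x) = (1/x) / k := by field_simp
  have h2 : (⌊1/x⌋ : ℝ) = ⌊1/x⌋₊ := by
    rw [natCast_floor_eq_intCast_floor (by positivity)]
  have h3 : (⌊1/(k*x)⌋ : ℝ) = ((⌊1/x⌋₊ / k : ℕ) : ℝ) := by
    rw [h1, ← Nat.floor_div_natCast, natCast_floor_eq_intCast_floor (by positivity)]
  have h4 : ((⌊1/x⌋₊ % k : ℕ) : ℝ) + k * ((⌊1/x⌋₊ / k : ℕ) : ℝ) = ⌊1/x⌋₊ := by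
    exact_mod_cast Nat.mod_add_div _ _
  rw [f, h2, h3, ← h4]
  field_simp
  ring

theorem f_mem_Icc {k : ℕ} (hk : 1 ≤ k) {x : ℝ} (hx : 0 < x) : f k x ∈ Set.Icc (0:ℝ) 1 := by
  have hk' : (0:ℝ) < k := by exact_mod_cast hk
  rw [f_eq hk hx]
  refine ⟨by positivity, ?_⟩
  rw [div_le_one hk']
  exact_mod_cast (Nat.mod_lt _ hk).le

theorem measurable_f (k : ℕ) : Measurable (f k) := by
  unfold f
  fun_prop

/-- Lebesgue measure on `(0,1]`; functions that are `MemLp _ 2 unitMeasure` represent the elements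
of `L²(0,1)`, and for these `ip` is a genuine (non-junk) integral. -/
noncomputable abbrev unitMeasure : Measure ℝ := volume.restrict (Set.Ioc 0 1)

theorem memLp_f {k : ℕ} (hk : 1 ≤ k) : MemLp (f k) 2 unitMeasure := by
  refine MemLp.of_bound (measurable_f k).aestronglyMeasurable 1 ?_
  refine (ae_restrict_iff' measurableSet_Ioc).2 (.of_forall fun x hx => ?_)
  have := f_mem_Icc hk hx.1
  rw [Real.norm_eq_abs, abs_of_nonneg this.1]
  exact this.2

theorem integrable_mul {g h : ℝ → ℝ} (hg : MemLp g 2 unitMeasure) (hh : MemLp h 2 unitMeasure) :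
    Integrable (fun x => g x * h x) unitMeasure := hg.integrable_mul hh

theorem ip_comm (g h : ℝ → ℝ) : ip g h = ip h g := by
  simp only [ip, mul_comm]

theorem ip_sum_left {ι : Type*} (s : Finset ι) (c : ι → ℝ) (F : ι → ℝ → ℝ) (h : ℝ → ℝ)
    (hF : ∀ i ∈ s, MemLp (F i) 2 unitMeasure) (hh : MemLp h 2 unitMeasure) :
    ip (∑ i ∈ s, c i • F i) h = ∑ i ∈ s, c i * ip (F i) h := by
  unfold ip
  simp only [Finset.sum_apply, Pi.smul_apply, smul_eq_mul, Finset.sum_mul, mul_assoc]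
  rw [integral_finsetSum _ fun i hi => (integrable_mul (hF i hi) hh).const_mul _]
  simp only [integral_const_mul]

theorem memLp_of_mem_span {S : Set (ℝ → ℝ)} (hS : ∀ g ∈ S, MemLp g 2 unitMeasure) {g : ℝ → ℝ}
    (hg : g ∈ Submodule.span ℝ S) : MemLp g 2 unitMeasure := by
  induction hg using Submodule.span_induction with
  | mem x hx => exact hS x hx
  | zero => exact MemLp.zero
  | add x y _ _ hx hy => exact hx.add hy
  | smul a x _ hx => exact hx.const_smul a

theorem ip_eq_zero_of_mem_span {S : Set (ℝ → ℝ)} {u : ℝ → ℝ} (hu : MemLp u 2 unitMeasure)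
    (hS : ∀ g ∈ S, MemLp g 2 unitMeasure) (h0 : ∀ g ∈ S, ip u g = 0) {g : ℝ → ℝ}
    (hg : g ∈ Submodule.span ℝ S) : ip u g = 0 := by
  induction hg using Submodule.span_induction with
  | mem x hx => exact h0 x hx
  | zero => simp [ip]
  | add x y hx hy hx' hy' =>
    have := integral_add (integrable_mul hu (memLp_of_mem_span hS hx))
      (integrable_mul hu (memLp_of_mem_span hS hy))
    simp only [ip, Pi.add_apply, mul_add] at *
    rw [this, hx', hy', add_zero]
  | smul a x hx hx' =>
    simp only [ip, Pi.smul_apply, smul_eq_mul, mul_left_comm _ a, integral_const_mul] at *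
    rw [hx', mul_zero]

/-! ### Asymptotics of `⟨f_m, f_k⟩` as `k → ∞` -/

/-- Closed form of the partial sums of `(n mod m)/m` minus its mean; it depends only on `N mod m`,
hence is bounded in `N`. -/
theorem mod_sub_mean_telescope {m : ℕ} (hm : 1 ≤ m) (N : ℕ) :
    ∑ n ∈ Finset.range N, (((n % m : ℕ) : ℝ) / m - ((m:ℝ) - 1) / (2 * m)) =
      ((N % m : ℕ) : ℝ) * (((N % m : ℕ) : ℝ) - m) / (2 * m) := by
  have hm' : (0:ℝ) < m := by exact_mod_cast hm
  induction N with
  | zero => simp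
  | succ N ih =>
    rw [Finset.sum_range_succ, ih]
    -- either the residue wraps around to `0`, or it increases by one
    rcases (Nat.succ_le_of_lt (Nat.mod_lt N hm)).eq_or_lt with h | h
    · have h1 : (N + 1) % m = 0 := by
        rw [Nat.add_mod_eq_add_mod_right 1 (Nat.mod_mod N m).symm, ← Nat.succ_eq_add_one, h, Nat.mod_self]
      have h2 : ((N % m : ℕ) : ℝ) = m - 1 := by rw [eq_sub_iff_add_eq]; exact_mod_cast h
      rw [h1, h2]
      field_simp
      push_cast
      ring
    · have h1 : (N + 1) % m = N % m + 1 := by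
        rw [Nat.add_mod_eq_add_mod_right 1 (Nat.mod_mod N m).symm, Nat.mod_eq_of_lt h]
      rw [h1]
      field_simp
      push_cast
      ring

/-- Dirichlet's test applied to the periodic mean-zero sequence of `mod_sub_mean_telescope`. -/
theorem weighted_sum_bound {m : ℕ} (hm : 1 ≤ m) : ∃ B : ℝ, ∀ k : ℕ,
    |∑ n ∈ Finset.range k, 1 / ((n:ℝ) + 1) * (((n % m : ℕ) : ℝ) / m - ((m:ℝ) - 1) / (2 * m))| ≤ B := by
  have hm' : (0:ℝ) < m := by exact_mod_cast hm
  have hanti : Antitone fun n : ℕ => 1 / ((n:ℝ) + 1) := fun a b hab => by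
    dsimp only
    gcongr
  have hC := hanti.cauchySeq_series_mul_of_tendsto_zero_of_bounded (b := (m:ℝ))
    tendsto_one_div_add_atTop_nhds_zero_nat
    (z := fun n => ((n % m : ℕ) : ℝ) / m - ((m:ℝ) - 1) / (2 * m)) (fun N => by
      rw [mod_sub_mean_telescope hm, Real.norm_eq_abs, abs_le]
      have h1 : ((N % m : ℕ) : ℝ) ≤ m := by exact_mod_cast (Nat.mod_lt N hm).le
      have h0 : (0:ℝ) ≤ ((N % m : ℕ) : ℝ) := by positivity
      rw [le_div_iff₀ (by positivity), div_le_iff₀ (by positivity)]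
      constructor <;> nlinarith)
  obtain ⟨B, hB⟩ := hC.isBounded_range.exists_norm_le
  refine ⟨B, fun k => ?_⟩
  simpa using hB _ ⟨k, rfl⟩

/-- On `(1/(n+2), 1/(n+1)]` the integrand is constant, since there `⌊1/x⌋ = n + 1 < k`. -/
theorem integral_piece {m k n : ℕ} (hm : 1 ≤ m) (hn : n + 1 < k) :
    ∫ x in (1 / ((n:ℝ) + 1 + 1))..(1 / ((n:ℝ) + 1)), f m x * f k x
      = 1 / k * ((((n + 1) % m : ℕ) : ℝ) / m * (1 / ((n:ℝ) + 1 + 1))) := by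
  have hk : 1 ≤ k := by omega
  have hk' : (0:ℝ) < k := by exact_mod_cast hk
  have hm' : (0:ℝ) < m := by exact_mod_cast hm
  have hle : 1 / ((n:ℝ) + 1 + 1) ≤ 1 / ((n:ℝ) + 1) := by gcongr; linarith
  have hcongr : Set.EqOn (fun x => f m x * f k x)
      (fun _ => (((n + 1) % m : ℕ) : ℝ) / m * (((n:ℝ) + 1) / k))
      (Set.Ioc (1 / ((n:ℝ) + 1 + 1)) (1 / ((n:ℝ) + 1))) := by
    intro x hx
    have hx0 : 0 < x := lt_trans (by positivity) hx.1
    have hfl : ⌊1 / x⌋₊ = n + 1 := by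
      rw [Nat.floor_eq_iff (by positivity)]
      push_cast
      constructor
      · rw [le_one_div (by positivity) hx0]; exact hx.2
      · rw [one_div_lt hx0 (by positivity)]; exact hx.1
    simp only [f_eq hm hx0, f_eq hk hx0, hfl, Nat.mod_eq_of_lt hn]
    push_cast
    rfl
  rw [intervalIntegral.integral_of_le hle, setIntegral_congr_fun measurableSet_Ioc hcongr,
    ← intervalIntegral.integral_of_le hle, intervalIntegral.integral_const, smul_eq_mul]
  field_simp
  ring

theorem intervalIntegrable_ff {m k : ℕ} (hm : 1 ≤ m) (hk : 1 ≤ k) {a b : ℝ}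
    (ha : a ∈ Set.Icc (0:ℝ) 1) (hb : b ∈ Set.Icc (0:ℝ) 1) :
    IntervalIntegrable (fun x => f m x * f k x) volume a b := by
  have h : IntervalIntegrable (fun x => f m x * f k x) volume 0 1 :=
    (intervalIntegrable_iff_integrableOn_Ioc_of_le zero_le_one).2
      (integrable_mul (memLp_f hm) (memLp_f hk))
  refine h.mono_set ?_
  rw [Set.uIcc_of_le zero_le_one]
  exact Set.uIcc_subset_Icc ha hb

theorem integral_main {m k : ℕ} (hm : 1 ≤ m) (N : ℕ) (hN : N < k) :
    ∫ x in (1 / ((N:ℝ) + 1))..1, f m x * f k x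
      = 1 / k * ∑ n ∈ Finset.range (N + 1), ((n % m : ℕ) : ℝ) / m * (1 / ((n:ℝ) + 1)) := by
  induction N with
  | zero => simp
  | succ N ih =>
    have hmem (n : ℕ) : 1 / ((n:ℝ) + 1) ∈ Set.Icc (0:ℝ) 1 :=
      ⟨by positivity, by rw [div_le_one (by positivity)]; linarith [n.cast_nonneg (α := ℝ)]⟩
    have hk : 1 ≤ k := by omega
    rw [Finset.sum_range_succ, mul_add, ← ih (by omega)]
    have h1 := intervalIntegrable_ff hm hk (hmem (N + 1)) (hmem N)
    have h2 := intervalIntegrable_ff hm hk (hmem N) ⟨zero_le_one, le_rfl⟩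
    rw [← intervalIntegral.integral_add_adjacent_intervals h1 h2]
    push_cast
    rw [integral_piece hm hN, add_comm]

/-- `k ⟨f_m, f_k⟩` equals the mean of `(n mod m)/m` times the `k`-th harmonic number, up to `O(1)`. -/
theorem ip_asymp {m : ℕ} (hm : 1 ≤ m) : ∃ B : ℝ, ∀ k : ℕ, 1 ≤ k →
    |k * ip (f m) (f k) - ((m:ℝ) - 1) / (2 * m) * ∑ n ∈ Finset.range k, 1 / ((n:ℝ) + 1)| ≤ B := by
  obtain ⟨B, hB⟩ := weighted_sum_bound hm
  refine ⟨B + 1, fun k hk => ?_⟩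
  have hk' : (0:ℝ) < k := by exact_mod_cast hk
  have hmem : 1 / (k:ℝ) ∈ Set.Icc (0:ℝ) 1 :=
    ⟨by positivity, by rw [div_le_one hk']; exact_mod_cast hk⟩
  have hsplit : ip (f m) (f k) = (∫ x in (0:ℝ)..(1 / k), f m x * f k x)
      + ∫ x in (1 / (k:ℝ))..1, f m x * f k x := by
    rw [intervalIntegral.integral_add_adjacent_intervals
      (intervalIntegrable_ff hm hk ⟨le_rfl, zero_le_one⟩ hmem)
      (intervalIntegrable_ff hm hk hmem ⟨zero_le_one, le_rfl⟩),
      intervalIntegral.integral_of_le zero_le_one, ip]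
  have hmain := integral_main hm (k - 1) (by omega : k - 1 < k)
  rw [Nat.sub_add_cancel hk, Nat.cast_sub hk, Nat.cast_one, sub_add_cancel] at hmain
  -- `0 ≤ f_m f_k ≤ 1`, so the part over `(0, 1/k]` contributes at most `1/k`
  have htail : ‖∫ x in (0:ℝ)..(1 / k), f m x * f k x‖ ≤ 1 * |1 / (k:ℝ) - 0| := by
    refine intervalIntegral.norm_integral_le_of_norm_le_const fun x hx => ?_
    rw [Set.uIoc_of_le hmem.1] at hx
    have h1 := f_mem_Icc hm hx.1
    have h2 := f_mem_Icc hk hx.1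
    rw [Real.norm_eq_abs, abs_of_nonneg (mul_nonneg h1.1 h2.1)]
    exact mul_le_one₀ h1.2 h2.1 h2.2
  rw [one_mul, sub_zero, abs_of_nonneg hmem.1, Real.norm_eq_abs] at htail
  have hid : k * ip (f m) (f k) - ((m:ℝ) - 1) / (2 * m) * ∑ n ∈ Finset.range k, 1 / ((n:ℝ) + 1)
      = (∑ n ∈ Finset.range k, 1 / ((n:ℝ) + 1) * (((n % m : ℕ) : ℝ) / m - ((m:ℝ) - 1) / (2 * m)))
        + k * ∫ x in (0:ℝ)..(1 / k), f m x * f k x := by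
    rw [hsplit, hmain, mul_add, ← mul_assoc, mul_one_div_cancel hk'.ne', one_mul]
    simp only [mul_sub, Finset.sum_sub_distrib, Finset.mul_sum]
    simp only [mul_comm (1 / ((_:ℝ) + 1))]
    ring
  rw [hid]
  refine (abs_add_le _ _).trans (add_le_add (hB k) ?_)
  rw [abs_mul, abs_of_pos hk']
  calc (k:ℝ) * _ ≤ k * (1 / k) := by gcongr
    _ = 1 := mul_one_div_cancel hk'.ne'

/-! ### Linear algebra of the Gram matrix -/

theorem posSemidef_gram {n : ℕ} (F : Fin n → ℝ → ℝ) (hF : ∀ i, MemLp (F i) 2 unitMeasure) :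
    (Matrix.of fun r s => ip (F r) (F s)).PosSemidef := by
  refine .of_dotProduct_mulVec_nonneg ?_ fun x => ?_
  · ext r s
    simp [ip_comm (F r)]
  · have hg : MemLp (∑ i, x i • F i) 2 unitMeasure :=
      memLp_finsetSum' _ fun i _ => (hF i).const_smul _
    have h : star x ⬝ᵥ (Matrix.of fun r s => ip (F r) (F s)).mulVec x
        = ip (∑ i, x i • F i) (∑ i, x i • F i) := by
      rw [ip_sum_left _ _ _ _ (fun i _ => hF i) hg]
      simp only [dotProduct, Matrix.mulVec, star_trivial, Matrix.of_apply]
      refine Finset.sum_congr rfl fun i _ => ?_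
      rw [ip_comm (F i), ip_sum_left _ _ _ _ (fun i _ => hF i) (hF i)]
      simp only [ip_comm (F i), mul_comm]
    rw [h]
    exact integral_nonneg fun _ => mul_self_nonneg _

/-- If the row vector `c` annihilates all columns of the positive semidefinite matrix `G` but the
last, `c` has positive last entry, and `G` with last column replaced by `v` has positive
determinant, then `c` pairs positively with `v`. -/
theorem pairing_pos {n : ℕ} {G : Matrix (Fin (n + 1)) (Fin (n + 1)) ℝ} (hG : G.PosSemidef)
    {c v : Fin (n + 1) → ℝ} (hc : ∀ s, s ≠ Fin.last n → ∑ r, c r * G r s = 0)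
    (hlast : 0 < c (Fin.last n))
    (hdet : 0 < Matrix.det (Matrix.of fun r s => if s = Fin.last n then v r else G r s)) :
    0 < ∑ r, c r * v r := by
  set A : Matrix (Fin (n + 1)) (Fin (n + 1)) ℝ :=
    Matrix.of fun r s => if s = Fin.last n then v r else G r s with hA
  have hcA : Matrix.vecMul c A = Pi.single (Fin.last n) (∑ r, c r * v r) := by
    ext s
    by_cases hs : s = Fin.last n
    · subst hs
      simp [hA, Matrix.vecMul, dotProduct]
    · simp [hA, Matrix.vecMul, dotProduct, hs, hc]
  -- the last diagonal cofactor is a principal minor of `G`, hence nonnegative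
  have hminor : 0 ≤ A.adjugate (Fin.last n) (Fin.last n) := by
    rw [Matrix.adjugate_fin_succ_eq_det_submatrix, Even.neg_one_pow ⟨_, rfl⟩, one_mul]
    have hsub : A.submatrix (Fin.last n).succAbove (Fin.last n).succAbove
        = G.submatrix Fin.castSucc Fin.castSucc := by
      ext r s
      simp [hA, (Fin.castSucc_lt_last s).ne]
    rw [hsub]
    exact (hG.submatrix _).det_nonneg
  have hcramer : c (Fin.last n) * A.det
      = (∑ r, c r * v r) * A.adjugate (Fin.last n) (Fin.last n) := by
    have h := congrFun (congrArg (fun w => Matrix.vecMul w A.adjugate) hcA) (Fin.last n)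
    simp only [Matrix.vecMul_vecMul, Matrix.mul_adjugate, Matrix.vecMul_smul, Matrix.vecMul_one,
      Pi.smul_apply, smul_eq_mul, Matrix.single_vecMul, Matrix.row_apply] at h
    rw [mul_comm, h]
  exact pos_of_mul_pos_left (hcramer ▸ mul_pos hlast hdet) hminor

/-! ### Positivity for large `k` -/

/-- The leading coefficient of `k ⟨g, f_k⟩` against the harmonic numbers is half the sum in `hL`,
so its positivity decides the sign for large `k`. -/
theorem eventually_pos {n : ℕ} {g : ℝ → ℝ} {c : Fin (n + 1) → ℝ}
    (hg : g = ∑ r, c r • f (r.val + 2))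
    (hL : 0 < ∑ r : Fin (n + 1), c r * (((r.val : ℝ) + 1) / ((r.val : ℝ) + 2))) :
    ∃ k₀ : ℕ, ∀ k : ℕ, k₀ ≤ k → 0 < ip g (f k) := by
  choose B hB using fun r : Fin (n + 1) => ip_asymp (m := r.val + 2) (by omega)
  set L := ∑ r : Fin (n + 1), c r * (((r.val : ℝ) + 1) / ((r.val : ℝ) + 2))
  have hlim := Real.tendsto_sum_range_one_div_nat_succ_atTop.eventually_gt_atTop
    ((∑ r, |c r| * B r) / (L / 2))
  obtain ⟨k₀, hk₀⟩ := Filter.eventually_atTop.1 hlim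
  refine ⟨max k₀ 1, fun k hk => ?_⟩
  have hk1 : 1 ≤ k := (le_max_right _ _).trans hk
  have hk' : (0:ℝ) < k := by exact_mod_cast hk1
  have hbig := hk₀ k ((le_max_left _ _).trans hk)
  rw [div_lt_iff₀ (by positivity)] at hbig
  set S := ∑ i ∈ Finset.range k, 1 / ((i:ℝ) + 1)
  have hterm (r : Fin (n + 1)) : c r * (((r.val : ℝ) + 1) / ((r.val : ℝ) + 2)) * (S / 2)
      - |c r| * B r ≤ c r * (k * ip (f (r.val + 2)) (f k)) := by
    have h := mul_le_mul_of_nonneg_left (hB r k hk1) (abs_nonneg (c r))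
    rw [← abs_mul] at h
    have h' := (abs_le.1 h).1
    have hmean : (((r.val + 2 : ℕ) : ℝ) - 1) / (2 * ((r.val + 2 : ℕ) : ℝ))
        = (((r.val : ℝ) + 1) / ((r.val : ℝ) + 2)) / 2 := by
      push_cast
      field_simp
      ring
    rw [hmean] at h'
    linarith
  have hsum := Finset.sum_le_sum fun r (_ : r ∈ Finset.univ) => hterm r
  rw [Finset.sum_sub_distrib, ← Finset.sum_mul] at hsum
  have hip : ∑ r, c r * (k * ip (f (r.val + 2)) (f k)) = k * ip g (f k) := by
    rw [hg, ip_sum_left _ _ _ _ (fun r _ => memLp_f (by omega)) (memLp_f hk1), Finset.mul_sum]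
    exact Finset.sum_congr rfl fun r _ => by ring
  rw [hip] at hsum
  refine pos_of_mul_pos_right (a := (k:ℝ)) ?_ hk'.le
  linarith

/-- If `H(j) > 0` then `⟨e_j,f_k⟩ > 0` for all sufficiently large `k`,
where `(e_j)` is the Gram–Schmidt orthonormalization of `(f_k)_{k≥2}`. -/
theorem stmt_12 (j : ℕ) (hj : 2 ≤ j) (e : ℕ → ℝ → ℝ)
    (horth : ∀ i i', 2 ≤ i → 2 ≤ i' → ip (e i) (e i') = if i = i' then 1 else 0)
    (hspan : ∀ m, 2 ≤ m →
      Submodule.span ℝ (e '' Set.Icc 2 m) = Submodule.span ℝ (f '' Set.Icc 2 m))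
    (hpos : ∀ m, 2 ≤ m → 0 < ip (e m) (f m))
    (hH : 0 < H j) :
    ∃ k₀ : ℕ, ∀ k : ℕ, k₀ ≤ k → 0 < ip (e j) (f k) := by
  obtain ⟨n, rfl⟩ : ∃ n, j = n + 2 := ⟨j - 2, by omega⟩
  have hemem (m : ℕ) (hm : 2 ≤ m) : e m ∈ Submodule.span ℝ (f '' Set.Icc 2 m) :=
    hspan m hm ▸ Submodule.subset_span ⟨m, ⟨hm, le_rfl⟩, rfl⟩
  have hemLp (m : ℕ) (hm : 2 ≤ m) : MemLp (e m) 2 unitMeasure :=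
    memLp_of_mem_span (by rintro _ ⟨i, hi, rfl⟩; exact memLp_f (by linarith [hi.1])) (hemem m hm)
  -- `e_j` is orthogonal to `span (e_2, …, e_m) = span (f_2, …, f_m)` for `m < j`
  have hperp (m : ℕ) (hm : 2 ≤ m) (hmn : m < n + 2) : ip (e (n + 2)) (f m) = 0 := by
    have hfm : f m ∈ Submodule.span ℝ (e '' Set.Icc 2 m) :=
      hspan m hm ▸ Submodule.subset_span ⟨m, ⟨hm, le_rfl⟩, rfl⟩
    refine ip_eq_zero_of_mem_span (hemLp _ hj) ?_ ?_ hfm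
    · rintro _ ⟨i, hi, rfl⟩
      exact hemLp i hi.1
    · rintro _ ⟨i, hi, rfl⟩
      rw [horth _ _ hj hi.1, if_neg (by have := hi.2; omega)]
  have hrange : f '' Set.Icc 2 (n + 2) = Set.range fun r : Fin (n + 1) => f (r.val + 2) := by
    ext g
    constructor
    · rintro ⟨i, hi, rfl⟩
      have := hi.1
      have := hi.2
      exact ⟨⟨i - 2, by omega⟩, by simp only; congr 1; omega⟩
    · rintro ⟨r, rfl⟩
      exact ⟨r.val + 2, ⟨by omega, by omega⟩, rfl⟩
  obtain ⟨c, hc⟩ : ∃ c : Fin (n + 1) → ℝ, ∑ r, c r • f (r.val + 2) = e (n + 2) := by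
    have h := hemem (n + 2) hj
    rw [hrange] at h
    exact (Submodule.mem_span_range_iff_exists_fun ℝ).1 h
  have hexp (h : ℝ → ℝ) (hh : MemLp h 2 unitMeasure) :
      ip (e (n + 2)) h = ∑ r, c r * ip (f (r.val + 2)) h := by
    rw [← hc, ip_sum_left _ _ _ _ (fun r _ => memLp_f (by omega)) hh]
  have hne (s : Fin (n + 1)) (hs : s ≠ Fin.last n) : ip (e (n + 2)) (f (s.val + 2)) = 0 :=
    hperp _ (by omega) (by have := Fin.val_lt_last hs; omega)
  -- `1 = ⟨e_j, e_j⟩ = c_j ⟨e_j, f_j⟩` and `⟨e_j, f_j⟩ > 0`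
  have hlast : 0 < c (Fin.last n) := by
    have h1 := horth (n + 2) (n + 2) hj hj
    rw [if_pos rfl, hexp _ (hemLp _ hj), Finset.sum_eq_single (Fin.last n)] at h1
    · have h2 := hpos (n + 2) hj
      rw [ip_comm] at h2
      simp only [Fin.val_last] at h1
      exact pos_of_mul_pos_left (h1 ▸ one_pos) h2.le
    · intro s _ hs
      rw [ip_comm, hne s hs, mul_zero]
    · simp
  refine eventually_pos hc.symm (pairing_pos
    (posSemidef_gram (fun r : Fin (n + 1) => f (r.val + 2)) fun r => memLp_f (by omega))
    (fun s hs => ?_) hlast ?_)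
  · simp only [Matrix.of_apply]
    rw [← hexp _ (memLp_f (by omega)), hne s hs]
  · refine lt_of_lt_of_eq hH (congrArg Matrix.det ?_)
    ext r s
    simp [Fin.ext_iff]
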